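/- arXiv:2403.02109 — 5 statements merged into one kernel-verified Lean document; each statement's English description precedes it below -/
import Mathlib

section
/- For every n ≥ 1, any CX circuit on n wires that is a solution to the WPA problem has length at least 2ⁿ − 2. -/
/-!
Every nonzero vector that is not a standard basis vector is produced by some gate, which
accounts for `2 ^ n - 1 - n` gates. For each wire that is a target at least once, the last
gate targeting it produces a basis vector, since the final signatures are basis vectors; these
gates are distinct for distinct wires and disjoint from the previous ones. It remains to see
that at most one wire is never a target (`untouched_unique`): the signatures always form
an invertible matrix (`det_wireSig`), so if `a ≠ b` kept their signatures `e_a`, `e_b` forever,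
`e_a + e_b` could never appear on any wire. The total is at least
`(2 ^ n - 1 - n) + (n - 1) = 2 ^ n - 2`.
-/

/-- One step of the wire-signature evolution: applying the CX gate `g = (c, t)`
updates the target wire's signature to the sum of the target's and control's
signatures; all other wires are unchanged. -/
def sigStep {n : ℕ} (f : Fin n → Fin n → ZMod 2) (g : Fin n × Fin n) :
    Fin n → Fin n → ZMod 2 :=
  Function.update f g.2 (f g.2 + f g.1)

/-- Wire signatures after executing the whole circuit `Q`; the initial
signature of wire `k` is the standard basis vector `e_k` of `𝔽₂ⁿ`. -/
def wireSig {n : ℕ} (Q : List (Fin n × Fin n)) : Fin n → Fin n → ZMod 2 :=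
  Q.foldl sigStep (fun k => Pi.single k 1)

/-- The circuit `Q` enumerates `𝔽₂ⁿ \ {0}`: every nonzero vector appears as a
wire signature at some time `0 ≤ t ≤ len Q`. -/
def Enumerates {n : ℕ} (Q : List (Fin n × Fin n)) : Prop :=
  ∀ v : Fin n → ZMod 2, v ≠ 0 →
    ∃ k : Fin n, ∃ t ≤ Q.length, wireSig (Q.take t) k = v

/-- A solution to the SPA problem: a circuit enumerating `𝔽₂ⁿ \ {0}`. -/
def IsSPA {n : ℕ} (Q : List (Fin n × Fin n)) : Prop := Enumerates Q

/-- A solution to the WPA problem: a circuit enumerating `𝔽₂ⁿ \ {0}` whose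
final wire signatures are `e_{σ(k)}` for some permutation `σ` of the wires. -/
def IsWPA {n : ℕ} (Q : List (Fin n × Fin n)) : Prop :=
  Enumerates Q ∧ ∃ σ : Equiv.Perm (Fin n), ∀ k, wireSig Q k = Pi.single (σ k) 1

/-- A solution to the NPA problem: a circuit enumerating `𝔽₂ⁿ \ {0}` whose
final wire signatures equal the initial ones. -/
def IsNPA {n : ℕ} (Q : List (Fin n × Fin n)) : Prop :=
  Enumerates Q ∧ ∀ k, wireSig Q k = Pi.single k 1

/-- Last-write principle: the final signature of a wire `k` is either its initial one, in
which case `k` is never a target, or it was produced by some gate with target `k`. -/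
lemma wireSig_last_write {n : ℕ} (Q : List (Fin n × Fin n)) (k : Fin n) :
    (wireSig Q k = Pi.single k 1 ∧ ∀ g ∈ Q, g.2 ≠ k) ∨
      ∃ i : Fin Q.length, Q[i].2 = k ∧ wireSig (Q.take (i + 1)) k = wireSig Q k := by
  induction Q using List.reverseRecOn with
  | nil => left; simp [wireSig]
  | append_singleton Q g ih =>
    have hstep : wireSig (Q ++ [g]) = sigStep (wireSig Q) g := by simp [wireSig]
    by_cases hk : g.2 = k
    · right
      refine ⟨⟨Q.length, by simp⟩, by simpa using hk, ?_⟩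
      rw [List.take_of_length_le (by simp)]
    · have hsame : wireSig (Q ++ [g]) k = wireSig Q k := by
        rw [hstep, sigStep, Function.update_of_ne (Ne.symm hk)]
      rcases ih with ⟨h1, h2⟩ | ⟨i, hi, hw⟩
      · left
        refine ⟨hsame.trans h1, fun g' hg' => ?_⟩
        rcases List.mem_append.1 hg' with h | h
        · exact h2 g' h
        · rw [List.mem_singleton.1 h]; exact hk
      · right
        refine ⟨⟨i, by have := i.2; grind⟩, ?_, ?_⟩
        · simpa [List.getElem_append_left i.2] using hi
        · rw [hsame, ← hw, List.take_append_of_le_length (by have := i.2; grind)]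

/-- Each gate is a row transvection, so the matrix of wire signatures has determinant one. -/
lemma det_wireSig {n : ℕ} (Q : List (Fin n × Fin n)) (hQ : ∀ g ∈ Q, g.1 ≠ g.2) :
    Matrix.det (Matrix.of (wireSig Q)) = 1 := by
  induction Q using List.reverseRecOn with
  | nil =>
    have : Matrix.of (wireSig ([] : List (Fin n × Fin n))) = 1 := by
      ext i j
      simp [wireSig, Matrix.one_apply, Pi.single_apply, eq_comm]
    rw [this, Matrix.det_one]
  | append_singleton Q g ih =>
    have hstep : wireSig (Q ++ [g]) = sigStep (wireSig Q) g := by simp [wireSig]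
    rw [hstep, ← ih fun g' h => hQ g' (by simp [h])]
    exact Matrix.det_updateRow_add_self (Matrix.of (wireSig Q)) (hQ g (by simp)).symm

/-- The signature of a wire is never the sum of the signatures of two other wires. -/
lemma wireSig_ne_add {n : ℕ} (Q : List (Fin n × Fin n)) (hQ : ∀ g ∈ Q, g.1 ≠ g.2)
    {a b k : Fin n} (ha : k ≠ a) (hb : k ≠ b) :
    wireSig Q k ≠ wireSig Q a + wireSig Q b := by
  intro h
  have hdet := Matrix.det_updateRow_add_self (Matrix.of (wireSig Q)) ha
  rw [det_wireSig Q hQ] at hdet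
  -- Adding row `a` to row `k` turns the latter into row `b`, in characteristic two.
  have hrow : wireSig Q k + wireSig Q a = wireSig Q b := by
    rw [h]
    ext j
    simp only [Pi.add_apply]
    rw [add_right_comm, CharTwo.add_self_eq_zero, zero_add]
  have hzero : Matrix.det ((Matrix.of (wireSig Q)).updateRow k
      (Matrix.of (wireSig Q) k + Matrix.of (wireSig Q) a)) = 0 := by
    refine Matrix.det_zero_of_row_eq hb ?_
    rw [Matrix.updateRow_self, Matrix.updateRow_ne hb.symm]
    exact hrow
  rw [hzero] at hdet
  exact zero_ne_one hdet

/-- If two wires `a ≠ b` were never targets, `e_a + e_b` would never be a signature. -/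
lemma untouched_unique {n : ℕ} (Q : List (Fin n × Fin n)) (hQ : ∀ g ∈ Q, g.1 ≠ g.2)
    (henum : Enumerates Q) {a b : Fin n} (ha : ∀ g ∈ Q, g.2 ≠ a) (hb : ∀ g ∈ Q, g.2 ≠ b) :
    a = b := by
  by_contra hab
  have hconst : ∀ c : Fin n, (∀ g ∈ Q, g.2 ≠ c) → ∀ t,
      wireSig (Q.take t) c = Pi.single c 1 := by
    intro c hc t
    rcases wireSig_last_write (Q.take t) c with h | ⟨i, hi, -⟩
    · exact h.1
    · exact absurd hi (hc _ (List.mem_of_mem_take (List.getElem_mem _)))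
  have hne : ∀ c : Fin n, (Pi.single c 1 : Fin n → ZMod 2) ≠ 0 := by
    intro c h
    simpa using congrFun h c
  have hv : (Pi.single a 1 + Pi.single b 1 : Fin n → ZMod 2) ≠ 0 := by
    intro h
    simpa [hab] using congrFun h a
  obtain ⟨k, t, -, hk⟩ := henum _ hv
  by_cases hka : k = a
  · subst hka
    rw [hconst k ha t] at hk
    exact hne b (left_eq_add.1 hk)
  by_cases hkb : k = b
  · subst hkb
    rw [hconst k hb t] at hk
    exact hne a (right_eq_add.1 hk)
  · refine wireSig_ne_add (Q.take t) (fun g hg => hQ g (List.mem_of_mem_take hg)) hka hkb ?_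
    rw [hk, hconst a ha t, hconst b hb t]

/-- For every `n ≥ 1`, any CX circuit on `n` wires that is a
solution to the WPA problem has length at least `2 ^ n - 2`. -/
theorem stmt_4 (n : ℕ) (hn : 1 ≤ n) (Q : List (Fin n × Fin n))
    (hQ : ∀ g ∈ Q, g.1 ≠ g.2) (hwpa : IsWPA Q) :
    2 ^ n - 2 ≤ Q.length := by
  classical
  obtain ⟨henum, σ, hσ⟩ := hwpa
  -- `P i` is the vector produced by gate `i`; `E` is the set of standard basis vectors.
  let P : Fin Q.length → (Fin n → ZMod 2) := fun i => wireSig (Q.take (i + 1)) Q[i].2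
  let E : Finset (Fin n → ZMod 2) := Finset.univ.image fun k : Fin n => Pi.single k 1
  have hE : E.card ≤ n := by
    simpa using Finset.card_image_le (s := Finset.univ)
      (f := fun k : Fin n => (Pi.single k 1 : Fin n → ZMod 2))
  have hcover : (Finset.univ : Finset (Fin n → ZMod 2)) ⊆
      insert 0 (E ∪ (Finset.univ.filter fun i => P i ∉ E).image P) := by
    intro v _
    rw [Finset.mem_insert, Finset.mem_union, or_iff_not_imp_left, or_iff_not_imp_left]
    intro hv hvE
    obtain ⟨k, t, -, hk⟩ := henum v hv
    rcases wireSig_last_write (Q.take t) k with ⟨h, -⟩ | ⟨i, hi, hw⟩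
    · exact absurd (Finset.mem_image.2 ⟨k, Finset.mem_univ _, h.symm.trans hk⟩) hvE
    · have hit := i.2
      simp only [List.length_take, lt_min_iff] at hit
      have hP : P ⟨i, by omega⟩ = v := by
        have hi' : (Q[(i : ℕ)]'(by omega)).2 = k := by simpa using hi
        rw [List.take_take, min_eq_left (by omega)] at hw
        change wireSig (Q.take (i + 1)) (Q[(i : ℕ)]'(by omega)).2 = v
        rw [hi', hw, hk]
      exact Finset.mem_image.2 ⟨⟨i, by omega⟩, by simpa [hP] using hvE, hP⟩
  -- The last gate targeting a given wire produces a basis vector.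
  have htouched : (Finset.univ.filter fun k : Fin n => ∃ g ∈ Q, g.2 = k) ⊆
      (Finset.univ.filter fun i => P i ∈ E).image fun i : Fin Q.length => Q[i].2 := by
    intro k hk
    obtain ⟨g, hg, hgk⟩ := (Finset.mem_filter.1 hk).2
    rcases wireSig_last_write Q k with ⟨-, h⟩ | ⟨i, hi, hw⟩
    · exact absurd hgk (h g hg)
    · refine Finset.mem_image.2 ⟨i, Finset.mem_filter.2 ⟨Finset.mem_univ _, ?_⟩, hi⟩
      refine Finset.mem_image.2 ⟨σ k, Finset.mem_univ _, ?_⟩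
      change _ = wireSig (Q.take (i + 1)) Q[i].2
      rw [hi, hw, hσ k]
  have huntouched : (Finset.univ.filter fun k : Fin n => ¬ ∃ g ∈ Q, g.2 = k).card ≤ 1 := by
    rw [Finset.card_le_one]
    intro a ha b hb
    simp only [Finset.mem_filter, Finset.mem_univ, true_and, not_exists, not_and] at ha hb
    exact untouched_unique Q hQ henum ha hb
  have h1 := Finset.card_le_card hcover
  have h2 := Finset.card_insert_le (0 : Fin n → ZMod 2)
    (E ∪ (Finset.univ.filter fun i => P i ∉ E).image P)
  have h3 := Finset.card_union_le E ((Finset.univ.filter fun i => P i ∉ E).image P)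
  have h4 := Finset.card_image_le (s := Finset.univ.filter fun i => P i ∉ E) (f := P)
  have h5 := (Finset.card_le_card htouched).trans Finset.card_image_le
  have h6 := Finset.card_filter_add_card_filter_not (s := (Finset.univ : Finset (Fin n)))
    (fun k => ∃ g ∈ Q, g.2 = k)
  have h7 := Finset.card_filter_add_card_filter_not
    (s := (Finset.univ : Finset (Fin Q.length))) (fun i => P i ∈ E)
  have h8 : (Finset.univ : Finset (Fin n → ZMod 2)).card = 2 ^ n := by simp
  rw [Finset.card_univ, Fintype.card_fin] at h6 h7
  omega
end

section
/- For every n ≥ 1, there exists a CX circuit on n wires (on the fully-connected topology) that enumerates 𝔽₂ⁿ∖{0} and has length exactly 2ⁿ − n − 1; combined with the lower bound, the minimal length of an SPA solution on the fully-connected topology equals 2ⁿ − n − 1. -/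
/-- Running `Q` from the state `f`, some wire carries the signature `v` at some time. -/
def Visits {n : ℕ} (f : Fin n → Fin n → ZMod 2) (Q : List (Fin n × Fin n))
    (v : Fin n → ZMod 2) : Prop :=
  ∃ k : Fin n, ∃ t ≤ Q.length, (Q.take t).foldl sigStep f k = v

lemma Visits.append_left {n : ℕ} {f : Fin n → Fin n → ZMod 2} {P : List (Fin n × Fin n)}
    {v : Fin n → ZMod 2} (h : Visits f P v) (Q : List (Fin n × Fin n)) :
    Visits f (P ++ Q) v := by
  obtain ⟨k, t, ht, h⟩ := h
  refine ⟨k, t, by simp; omega, ?_⟩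
  rwa [List.take_append_of_le_length ht]

lemma Visits.append_right {n : ℕ} {f : Fin n → Fin n → ZMod 2} {P Q : List (Fin n × Fin n)}
    {v : Fin n → ZMod 2} (h : Visits (P.foldl sigStep f) Q v) : Visits f (P ++ Q) v := by
  obtain ⟨k, t, ht, h⟩ := h
  refine ⟨k, P.length + t, by simp; omega, ?_⟩
  rw [List.take_length_add_append, List.foldl_append, h]

/-- Each gate contributes at most one signature that is not already present at the start. -/
lemma exists_card_visits {n : ℕ} (Q : List (Fin n × Fin n)) :
    ∀ f : Fin n → Fin n → ZMod 2, ∃ A : Finset (Fin n → ZMod 2), A.card ≤ Q.length ∧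
      ∀ v, Visits f Q v → v ∈ Finset.univ.image f ∪ A := by
  induction Q with
  | nil =>
    refine fun f => ⟨∅, by simp, ?_⟩
    rintro v ⟨k, t, -, h⟩
    simp at h
    simp [← h]
  | cons g Q ih =>
    intro f
    obtain ⟨A, hA, h⟩ := ih (sigStep f g)
    refine ⟨insert (f g.2 + f g.1) A, (Finset.card_insert_le _ _).trans (by simpa using hA), ?_⟩
    rintro v ⟨k, t, ht, hv⟩
    cases t with
    | zero =>
      simp at hv
      simp [← hv]
    | succ t =>
      have := h v ⟨k, t, by simpa using ht, by simpa using hv⟩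
      simp only [Finset.mem_union, Finset.mem_image, Finset.mem_univ, true_and,
        Finset.mem_insert] at this ⊢
      rcases this with ⟨j, hj⟩ | hA
      · by_cases hjt : j = g.2
        · subst hjt
          right; left
          simpa [sigStep] using hj.symm
        · left
          exact ⟨j, by simpa [sigStep, hjt] using hj⟩
      · exact Or.inr (Or.inr hA)

/-- Gray code: with controls in `S` only, wire `t` can be led through its whole coset modulo the
span of the control signatures, in `2 ^ |S| - 1` gates. The circuit does not depend on the state,
which allows the recursion `G (insert a S) = G S ++ [(a, t)] ++ G S`. -/
lemma exists_gray {n : ℕ} (t : Fin n) (S : Finset (Fin n)) (hS : t ∉ S) :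
    ∃ Q : List (Fin n × Fin n), (∀ g ∈ Q, g.1 ≠ g.2) ∧ Q.length + 1 = 2 ^ S.card ∧
      ∀ f : Fin n → Fin n → ZMod 2,
        (∀ k ≠ t, Q.foldl sigStep f k = f k) ∧
        Q.foldl sigStep f t - f t ∈ Submodule.span (ZMod 2) (f '' S) ∧
        ∀ v, v - f t ∈ Submodule.span (ZMod 2) (f '' S) → Visits f Q v := by
  induction S using Finset.induction_on with
  | empty =>
    refine ⟨[], by simp, by simp, fun f => ⟨by simp, by simp, fun v hv => ⟨t, 0, by simp, ?_⟩⟩⟩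
    simpa [sub_eq_zero, eq_comm] using hv
  | insert a S ha ih =>
    rw [Finset.mem_insert, not_or] at hS
    obtain ⟨hta, htS⟩ := hS
    obtain ⟨Q, hQ, hlen, H⟩ := ih htS
    refine ⟨Q ++ ((a, t) :: Q), ?_, ?_, fun f => ?_⟩
    · intro g hg
      simp only [List.mem_append, List.mem_cons] at hg
      rcases hg with hg | rfl | hg
      · exact hQ g hg
      · exact Ne.symm hta
      · exact hQ g hg
    · rw [Finset.card_insert_of_notMem ha, pow_succ]
      simp only [List.length_append, List.length_cons]
      omega
    · obtain ⟨h1, h2, h3⟩ := H f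
      set f1 := Q.foldl sigStep f with hf1
      set f2 := sigStep f1 (a, t) with hf2
      have e2 : ∀ k ≠ t, f2 k = f k := fun k hk => by simp [hf2, sigStep, hk, h1 k hk]
      have e2t : f2 t = f1 t + f a := by simp [hf2, sigStep, h1 a (Ne.symm hta)]
      have him : f2 '' (S : Set (Fin n)) = f '' (S : Set (Fin n)) :=
        Set.image_congr fun k hk => e2 k fun h => htS (h ▸ hk)
      obtain ⟨k1, k2, k3⟩ := H f2
      rw [him] at k2 k3
      have hfold : (Q ++ ((a, t) :: Q)).foldl sigStep f = Q.foldl sigStep f2 := by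
        rw [List.foldl_append, List.foldl_cons]
      rw [hfold, Finset.coe_insert, Set.image_insert_eq]
      refine ⟨fun k hk => (k1 k hk).trans (e2 k hk), ?_, fun v hv => ?_⟩
      · rw [Submodule.mem_span_insert]
        refine ⟨1, _, add_mem k2 h2, ?_⟩
        rw [e2t, one_smul]
        abel
      · obtain ⟨c, z, hz, hc⟩ := Submodule.mem_span_insert.1 hv
        have hc01 : c = 0 ∨ c = 1 := by
          clear hc
          revert c; decide
        rcases hc01 with rfl | rfl
        · refine (h3 v ?_).append_left _
          rwa [hc, zero_smul, zero_add]
        · have hV : Visits f2 Q v := by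
            refine k3 v ?_
            have : v - f2 t = z - (f1 t - f t) := by
              rw [e2t, ← sub_add_cancel v (f t), hc, one_smul]
              abel
            rw [this]
            exact sub_mem hz h2
          rw [List.append_cons]
          refine Visits.append_right ?_
          rwa [List.foldl_append]

/-- The vectors supported on the first `m` coordinates can be enumerated optimally by a circuit
that leaves the wires from `m` on untouched; the span condition is what keeps the induction going. -/
lemma exists_prefix_circuit {n : ℕ} (m : ℕ) (hm : m ≤ n) :
    ∃ Q : List (Fin n × Fin n), (∀ g ∈ Q, g.1 ≠ g.2) ∧ Q.length + m + 1 = 2 ^ m ∧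
      (∀ k : Fin n, m ≤ k → wireSig Q k = Pi.single k 1) ∧
      ∀ v : Fin n → ZMod 2, (∀ i : Fin n, m ≤ i → v i = 0) →
        v ∈ Submodule.span (ZMod 2)
          (wireSig Q '' (Finset.univ.filter fun k : Fin n => (k : ℕ) < m)) ∧
        (v ≠ 0 → Visits (fun k => Pi.single k 1) Q v) := by
  induction m with
  | zero =>
    refine ⟨[], by simp, by simp, by simp [wireSig], fun v hv => ?_⟩
    obtain rfl : v = 0 := funext fun i => hv i (Nat.zero_le _)
    simp
  | succ m ih =>
    obtain ⟨Q, hQ, hlen, hfix, hV⟩ := ih (by omega)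
    set t : Fin n := ⟨m, hm⟩ with ht
    set S : Finset (Fin n) := Finset.univ.filter fun k : Fin n => (k : ℕ) < m with hSdef
    have htS : t ∉ S := by simp [hSdef, ht]
    have hcard : S.card = m := by
      rw [hSdef, Fin.card_filter_val_lt]
      omega
    obtain ⟨G, hG, hGlen, H⟩ := exists_gray t S htS
    obtain ⟨h1, h2, h3⟩ := H (wireSig Q)
    have hsig : wireSig (Q ++ G) = G.foldl sigStep (wireSig Q) := by
      simp [wireSig, List.foldl_append]
    have hft : wireSig Q t = Pi.single t 1 := hfix t le_rfl
    have hins : (Finset.univ.filter fun k : Fin n => (k : ℕ) < m + 1) = insert t S := by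
      ext k
      simp [hSdef, ht, Fin.ext_iff]
      omega
    have him : wireSig (Q ++ G) '' (S : Set (Fin n)) = wireSig Q '' (S : Set (Fin n)) :=
      Set.image_congr fun k hk => by rw [hsig, h1 k fun h => htS (h ▸ hk)]
    refine ⟨Q ++ G, ?_, ?_, ?_, fun v hv => ?_⟩
    · intro g hg
      exact (List.mem_append.1 hg).elim (hQ g) (hG g)
    · rw [hcard] at hGlen
      rw [pow_succ, List.length_append]
      omega
    · intro k hk
      rw [hsig, h1 k (by rintro rfl; simp [ht] at hk)]
      exact hfix k (by omega)
    ·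
      -- Removing the `t`-component of `v` leaves a vector supported on the first `m` coordinates.
      have hrest : ∀ i : Fin n, m ≤ i → (v - v t • (Pi.single t 1 : Fin n → ZMod 2)) i = 0 := by
        intro i hi
        by_cases hit : i = t
        · subst hit; simp
        · have : m ≠ i := fun h => hit (Fin.ext h.symm)
          simp [hit, hv i (by omega)]
      refine ⟨?_, fun hv0 => ?_⟩
      · rw [hins, Finset.coe_insert, Set.image_insert_eq, him, Submodule.mem_span_insert]
        refine ⟨v t, _, sub_mem (hV _ hrest).1 (Submodule.smul_mem _ (v t) h2), ?_⟩
        rw [hsig, hft, smul_sub]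
        abel
      · have hvt : v t = 0 ∨ v t = 1 := by
          generalize v t = c
          revert c; decide
        rcases hvt with h | h
        · rw [h, zero_smul, sub_zero] at hrest
          exact ((hV v hrest).2 hv0).append_left _
        · refine Visits.append_right (h3 v ?_)
          rw [h, one_smul] at hrest
          rw [hft]
          exact (hV _ hrest).1

/-- For every `n ≥ 1`, there exists a CX circuit on `n` wires
(fully-connected topology) enumerating `𝔽₂ⁿ \ {0}` of length exactly
`2 ^ n - n - 1`, and no such circuit is shorter: the minimal length of an SPA
solution on the fully-connected topology equals `2 ^ n - n - 1`. -/
theorem stmt_7 (n : ℕ) (hn : 1 ≤ n) :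
    IsLeast {L : ℕ | ∃ Q : List (Fin n × Fin n),
        (∀ g ∈ Q, g.1 ≠ g.2) ∧ IsSPA Q ∧ Q.length = L}
      (2 ^ n - n - 1) := by
  constructor
  · obtain ⟨Q, hQ, hlen, -, hV⟩ := exists_prefix_circuit n le_rfl
    exact ⟨Q, hQ, fun v hv => (hV v fun i hi => absurd i.2 (by omega)).2 hv, by omega⟩
  · rintro L ⟨Q, -, hQ, rfl⟩
    obtain ⟨A, hA, h⟩ := exists_card_visits Q (fun k => Pi.single k 1)
    have hsub : (Finset.univ : Finset (Fin n → ZMod 2)).erase 0 ⊆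
        Finset.univ.image (fun k : Fin n => (Pi.single k 1 : Fin n → ZMod 2)) ∪ A :=
      fun v hv => h v (hQ v (Finset.ne_of_mem_erase hv))
    have hc := (Finset.card_le_card hsub).trans (Finset.card_union_le _ _)
    have hi : (Finset.univ.image (fun k : Fin n => (Pi.single k 1 : Fin n → ZMod 2))).card ≤ n :=
      Finset.card_image_le.trans (by simp)
    rw [Finset.card_erase_of_mem (Finset.mem_univ _), Finset.card_univ, Fintype.card_fun,
      ZMod.card, Fintype.card_fin] at hc
    omega
end

section
/- Let i ≠ j be wires in {0, …, n−1} and let S be the set of all wires between i and j inclusive. The circuit V(i, j) respects the linear topology, consists of exactly 2·|i − j| − 1 gates, and for any initial assignment of signatures w_0, …, w_{n−1} ∈ 𝔽₂ⁿ, after executing V(i, j) the signature of wire j equals Σ_{l ∈ S} w_l while the signature of every wire k ≠ j equals w_k. -/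
/-!
The circuit `V(i, j)` conjugates `V(i + d, j)` by the gate `(i, i + d)`. The first copy of that
gate replaces `w_{i+d}` by `w_{i+d} + w_i`, so that the inner circuit adds `w_i` to its sum on
wire `j`; the inner circuit leaves the wires `i` and `i + d` alone, so the second copy of the gate
restores `w_{i+d}`, since `x + x = 0` in characteristic two. `runN_conj` is this step, for an
arbitrary summation set; `runN_Vcirc` iterates it, with both directions treated at once through the
interval `Finset.Icc (min i j) (max i j)`. The gate list and its length follow by the same
recursion.
-/

/-- Evolution of wire data under a CX circuit whose wires are indexed by `ℕ`:
each gate `g = (c, t)` replaces the data on its target wire `t` with the sum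
of the data on wires `t` and `c`; all other wires are unchanged. -/
def runN {α : Type} [Add α] (w : ℕ → α) (Q : List (ℕ × ℕ)) : ℕ → α :=
  Q.foldl (fun f g => Function.update f g.2 (f g.2 + f g.1)) w

/-- Wire signatures of a circuit: the initial signature of wire `k` is the
standard basis vector `e_k`. -/
def wireSigN (Q : List (ℕ × ℕ)) : ℕ → ℕ → ZMod 2 :=
  runN (fun k => Pi.single k 1) Q

/-- The circuit `V(i, j)`: a single gate `(i, j)` if `|i - j| = 1`, and
otherwise the gate `(i, i + d)` followed by `V(i + d, j)` followed by the gate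
`(i, i + d)`, where `d = sgn (j - i)`. -/
def Vcirc (i j : ℕ) : List (ℕ × ℕ) :=
  if _h : i = j then []
  else if _h2 : i + 1 = j ∨ j + 1 = i then [(i, j)]
  else if _h3 : i < j then (i, i + 1) :: (Vcirc (i + 1) j ++ [(i, i + 1)])
  else (i, i - 1) :: (Vcirc (i - 1) j ++ [(i, i - 1)])
termination_by (i - j) + (j - i)
decreasing_by all_goals omega

/-- The circuit `GRAY n` on wires `{0, …, n-1}`: `GRAY 1` is empty; for even
`n = 2m` it is `GRAY (n-1)` shifted to wires `{1, …, n-1}`, then `V(0, m)`,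
then `GRAY (n-1)` shifted again; for odd `n = 2m + 1 ≥ 3` it is `GRAY (n-1)`
on wires `{0, …, n-2}`, then `V(n-1, m)`, then `GRAY (n-1)` again. -/
def GRAY : ℕ → List (ℕ × ℕ)
  | 0 => []
  | 1 => []
  | n + 2 =>
    if (n + 2) % 2 = 0 then
      (GRAY (n + 1)).map (fun g => (g.1 + 1, g.2 + 1)) ++ Vcirc 0 ((n + 2) / 2)
        ++ (GRAY (n + 1)).map (fun g => (g.1 + 1, g.2 + 1))
    else
      GRAY (n + 1) ++ Vcirc (n + 1) ((n + 2) / 2) ++ GRAY (n + 1)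

/-- The three CX gates implementing `SWAP(i, i+1)`. -/
def SWAPg (i : ℕ) : List (ℕ × ℕ) := [(i, i + 1), (i + 1, i), (i, i + 1)]

/-- The circuit `SPA n` on wires `{0, …, n-1}`: `SPA 1` is empty; for `n ≥ 2`
with `m = ⌊n/2⌋` it is `GRAY n`, then `SWAP(m, m+1), …, SWAP(n-2, n-1)`, then
`SPA (n-1)` on the first `n - 1` wires. -/
def SPAc : ℕ → List (ℕ × ℕ)
  | 0 => []
  | 1 => []
  | n + 2 =>
    GRAY (n + 2)
      ++ (List.range (n + 1 - (n + 2) / 2)).flatMap (fun s => SWAPg ((n + 2) / 2 + s))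
      ++ SPAc (n + 1)

/-- Conjugating by the gate `(a, b)` a circuit that writes the sum over `S` to wire `j` adds the
wire `a` to `S`, provided `b, j ∈ S`, `a ∉ S` and `b ≠ j`. -/
lemma runN_conj {n : ℕ} {C : List (ℕ × ℕ)} {a b j : ℕ} {S : Finset ℕ}
    (hC : ∀ w : ℕ → (Fin n → ZMod 2), runN w C = Function.update w j (∑ l ∈ S, w l))
    (ha : a ∉ S) (hb : b ∈ S) (hj : j ∈ S) (hbj : b ≠ j) (w : ℕ → (Fin n → ZMod 2)) :
    runN w ((a, b) :: (C ++ [(a, b)])) = Function.update w j (∑ l ∈ insert a S, w l) := by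
  have hab : a ≠ b := fun h => ha (h ▸ hb)
  have haj : a ≠ j := fun h => ha (h ▸ hj)
  have hrun : runN w ((a, b) :: (C ++ [(a, b)])) =
      (fun f : ℕ → (Fin n → ZMod 2) => Function.update f b (f b + f a))
        (runN (Function.update w b (w b + w a)) C) := by
    simp [runN]
  have hsum : ∑ l ∈ S, Function.update w b (w b + w a) l = ∑ l ∈ insert a S, w l := by
    rw [Finset.sum_update_of_mem hb, Finset.sum_insert ha, ← Finset.add_sum_erase S w hb,
      Finset.sdiff_singleton_eq_erase]
    abel
  rw [hrun, hC, hsum]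
  funext k
  by_cases hkb : k = b
  · subst hkb
    have h2 : w a + w a = 0 := by
      funext x
      exact CharTwo.add_self_eq_zero _
    simp [hbj, haj, hab, add_assoc, h2]
  · by_cases hkj : k = j
    · subst hkj
      simp [hkb]
    · simp [hkb, hkj]

/-- The action of `V(i, j)`: it writes the sum over the wires between `i` and `j` to wire `j` and
changes nothing else. -/
lemma runN_Vcirc {n : ℕ} (i j : ℕ) (hij : i ≠ j) (w : ℕ → (Fin n → ZMod 2)) :
    runN w (Vcirc i j) =
      Function.update w j (∑ l ∈ Finset.Icc (min i j) (max i j), w l) := by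
  induction i using Vcirc.induct (j := j) generalizing w with
  | case1 => exact absurd rfl hij
  | case2 i _ h2 =>
    have hS : Finset.Icc (min i j) (max i j) = {j, i} := by
      ext x
      simp only [Finset.mem_Icc, Finset.mem_insert, Finset.mem_singleton]
      omega
    rw [Vcirc, dif_neg hij, dif_pos h2, hS, Finset.sum_pair hij.symm]
    rfl
  | case3 i _ h2 h3 ih =>
    have hS : Finset.Icc (min i j) (max i j) =
        insert i (Finset.Icc (min (i + 1) j) (max (i + 1) j)) := by
      ext x
      simp only [Finset.mem_Icc, Finset.mem_insert]
      omega
    rw [Vcirc, dif_neg hij, dif_neg h2, dif_pos h3, hS]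
    refine runN_conj (ih (by omega)) ?_ ?_ ?_ (by omega) w <;>
      simp only [Finset.mem_Icc] <;> omega
  | case4 i _ h2 h3 ih =>
    have hS : Finset.Icc (min i j) (max i j) =
        insert i (Finset.Icc (min (i - 1) j) (max (i - 1) j)) := by
      ext x
      simp only [Finset.mem_Icc, Finset.mem_insert]
      omega
    rw [Vcirc, dif_neg hij, dif_neg h2, dif_neg h3, hS]
    refine runN_conj (ih (by omega)) ?_ ?_ ?_ (by omega) w <;>
      simp only [Finset.mem_Icc] <;> omega

lemma length_Vcirc (i j : ℕ) (hij : i ≠ j) :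
    (Vcirc i j).length = 2 * (max i j - min i j) - 1 := by
  induction i using Vcirc.induct (j := j) with
  | case1 => exact absurd rfl hij
  | case2 i _ h2 =>
    rw [Vcirc, dif_neg hij, dif_pos h2, List.length_singleton]
    omega
  | case3 i _ h2 h3 ih =>
    have := ih (by omega)
    rw [Vcirc, dif_neg hij, dif_neg h2, dif_pos h3]
    simp only [List.length_cons, List.length_append, List.length_nil]
    omega
  | case4 i _ h2 h3 ih =>
    have := ih (by omega)
    rw [Vcirc, dif_neg hij, dif_neg h2, dif_neg h3]
    simp only [List.length_cons, List.length_append, List.length_nil]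
    omega

lemma adjacent_of_mem_Vcirc {n : ℕ} (i j : ℕ) (hi : i < n) (hj : j < n) :
    ∀ g ∈ Vcirc i j, (g.1 = g.2 + 1 ∨ g.2 = g.1 + 1) ∧ g.1 < n ∧ g.2 < n := by
  induction i using Vcirc.induct (j := j) with
  | case1 =>
    rw [Vcirc]
    simp
  | case2 i h1 h2 =>
    rw [Vcirc, dif_neg h1, dif_pos h2]
    simp only [List.mem_singleton, forall_eq]
    omega
  | case3 i h1 h2 h3 ih =>
    rw [Vcirc, dif_neg h1, dif_neg h2, dif_pos h3]
    intro g hg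
    simp only [List.mem_cons, List.mem_append, List.not_mem_nil, or_false] at hg
    rcases hg with rfl | hg | rfl
    · dsimp only
      omega
    · exact ih (by omega) g hg
    · dsimp only
      omega
  | case4 i h1 h2 h3 ih =>
    rw [Vcirc, dif_neg h1, dif_neg h2, dif_neg h3]
    intro g hg
    simp only [List.mem_cons, List.mem_append, List.not_mem_nil, or_false] at hg
    rcases hg with rfl | hg | rfl
    · dsimp only
      omega
    · exact ih (by omega) g hg
    · dsimp only
      omega

/-- Let `i ≠ j` be wires in `{0, …, n-1}` and `S` the set of
wires between `i` and `j` inclusive. The circuit `V(i, j)` respects the linear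
topology (and acts only on wires `< n`), consists of exactly `2·|i - j| - 1`
gates, and for any initial assignment `w` of signatures in `𝔽₂ⁿ`, after
executing `V(i, j)` the signature of wire `j` equals `∑_{l ∈ S} w l` while
every other wire keeps its signature. -/
theorem stmt_8 (n i j : ℕ) (hij : i ≠ j) (hi : i < n) (hj : j < n)
    (w : ℕ → (Fin n → ZMod 2)) :
    (∀ g ∈ Vcirc i j, (g.1 = g.2 + 1 ∨ g.2 = g.1 + 1) ∧ g.1 < n ∧ g.2 < n) ∧
    (Vcirc i j).length = 2 * (max i j - min i j) - 1 ∧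
    runN w (Vcirc i j) j = ∑ l ∈ Finset.Icc (min i j) (max i j), w l ∧
    (∀ k, k ≠ j → runN w (Vcirc i j) k = w k) := by
  refine ⟨adjacent_of_mem_Vcirc i j hi hj, length_Vcirc i j hij, ?_, fun k hk => ?_⟩
  · rw [runN_Vcirc i j hij w, Function.update_self]
  · rw [runN_Vcirc i j hij w, Function.update_of_ne hk]
end

section
/- For every n ≥ 1, let m = ⌊n/2⌋ and consider the circuit GRAY_n with initial wire signatures v_k(0) = e_k. Then: (1) for every v ∈ 𝔽₂ⁿ with ⟨v, e_m⟩ = 1 there exists a time 0 ≤ t ≤ len(GRAY_n) with v_m(t) = v, where all such signatures occur on wire m; and (2) v_k(len(GRAY_n)) = e_k for every wire k ≠ m, so m is the only wire whose final signature v satisfies ⟨v, e_m⟩ = 1. -/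
section Helpers

open Submodule

/-- Wire data with values in `𝔽₂`-vectors. -/
abbrev WireData := ℕ → ℕ → ZMod 2

lemma vec_add_self (x : ℕ → ZMod 2) : x + x = 0 := by
  funext j
  exact CharTwo.add_self_eq_zero _

lemma runN_append (w : WireData) (P Q : List (ℕ × ℕ)) :
    runN w (P ++ Q) = runN (runN w P) Q := by
  simp [runN, List.foldl_append]

lemma runN_cons (w : WireData) (g : ℕ × ℕ) (Q : List (ℕ × ℕ)) :
    runN w (g :: Q) = runN (Function.update w g.2 (w g.2 + w g.1)) Q := rfl

lemma runN_nil (w : WireData) : runN w [] = w := rfl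

lemma runN_singleton (w : WireData) (g : ℕ × ℕ) :
    runN w [g] = Function.update w g.2 (w g.2 + w g.1) := rfl

lemma runN_shift (Q : List (ℕ × ℕ)) (w : WireData) :
    runN w (Q.map fun g => (g.1 + 1, g.2 + 1)) 0 = w 0 ∧
      ∀ k, runN w (Q.map fun g => (g.1 + 1, g.2 + 1)) (k + 1) =
        runN (fun j => w (j + 1)) Q k := by
  induction Q generalizing w with
  | nil => simp [runN]
  | cons g Q ih =>
    simp only [List.map_cons, runN_cons]
    refine ⟨by rw [(ih _).1]; simp, fun k => ?_⟩
    rw [(ih _).2]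
    congr 1
    funext j
    by_cases h : j = g.2 <;> simp [h]

/-- The common core of the two recursive cases of `V(i, j)`: prefixing and suffixing a circuit
from `i'` to `j` by the gate `(i, i')` gives one from `i` to `j`, with `i'` as an additional
intermediate wire. -/
lemma ladder_step {i i' j : ℕ} {B B' : Set ℕ} {Q : List (ℕ × ℕ)}
    (hi : i ≠ i') (hij : i ≠ j) (hi'j : i' ≠ j) (hi'B : i' ∈ B) (hBB : B' ⊆ B) (hn : i' ∉ B')
    (hQ : ∀ w : WireData, (∀ k, k ≠ j → runN w Q k = w k) ∧
      ∃ u ∈ span (ZMod 2) (w '' B'), runN w Q j = w j + w i' + u) (w : WireData) :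
    (∀ k, k ≠ j → runN w ((i, i') :: (Q ++ [(i, i')])) k = w k) ∧
      ∃ u ∈ span (ZMod 2) (w '' B),
        runN w ((i, i') :: (Q ++ [(i, i')])) j = w j + w i + u := by
  obtain ⟨h1, u, hu, h2⟩ := hQ (Function.update w i' (w i' + w i))
  simp only [runN_cons, runN_append, runN_nil]
  refine ⟨fun k hk => ?_, w i' + u, add_mem (subset_span ⟨i', hi'B, rfl⟩) ?_, ?_⟩
  · by_cases hk' : k = i'
    · subst hk'
      rw [Function.update_self, h1 _ hk, h1 _ hij, Function.update_self,
        Function.update_of_ne hi, add_assoc, vec_add_self, add_zero]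
    · rw [Function.update_of_ne hk', h1 _ hk, Function.update_of_ne hk']
  · refine span_mono ?_ hu
    rintro _ ⟨k, hk, rfl⟩
    have : k ≠ i' := fun h => hn (h ▸ hk)
    exact ⟨k, hBB hk, by simp [this]⟩
  · rw [Function.update_of_ne hi'j.symm, h2, Function.update_self,
      Function.update_of_ne hi'j.symm]
    abel

/-- `V(i, j)` adds to wire `j` the data of wire `i` plus a combination of the wires strictly
between `i` and `j`, and restores all other wires. -/
lemma runN_Vcirc_s9 (i j : ℕ) (hij : i ≠ j) (w : WireData) :
    (∀ k, k ≠ j → runN w (Vcirc i j) k = w k) ∧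
      ∃ u ∈ span (ZMod 2) (w '' {k | (i < k ∧ k < j) ∨ (j < k ∧ k < i)}),
        runN w (Vcirc i j) j = w j + w i + u := by
  induction i using Vcirc.induct (j := j) generalizing w with
  | case1 => exact absurd rfl hij
  | case2 i h h2 =>
    rw [Vcirc, dif_neg h, dif_pos h2]
    exact ⟨fun k hk => by simp [runN_singleton, hk], 0, zero_mem _, by simp [runN_singleton]⟩
  | case3 i h h2 h3 ih =>
    rw [Vcirc, dif_neg h, dif_neg h2, dif_pos h3]
    refine ladder_step (by omega) hij (by omega) ?_ ?_ ?_ (ih (by omega)) w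
    · simp only [Set.mem_ofPred_eq]; omega
    · intro k; simp only [Set.mem_ofPred_eq]; omega
    · simp only [Set.mem_ofPred_eq]; omega
  | case4 i h h2 h3 ih =>
    rw [Vcirc, dif_neg h, dif_neg h2, dif_neg h3]
    refine ladder_step (by omega) hij (by omega) ?_ ?_ ?_ (ih (by omega)) w
    · simp only [Set.mem_ofPred_eq]; omega
    · intro k; simp only [Set.mem_ofPred_eq]; omega
    · simp only [Set.mem_ofPred_eq]; omega

/-- `Q` sweeps `A` on wire `m`: for all initial wire data `w`, it restores every wire other than
`m`, changes wire `m` by an element of `span (w '' A)`, and wire `m` takes every value in the coset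
`w m + span (w '' A)` at some time. -/
def Sweeps (Q : List (ℕ × ℕ)) (A : Set ℕ) (m : ℕ) : Prop :=
  ∀ w : WireData, (∀ k, k ≠ m → runN w Q k = w k) ∧
    (∃ u ∈ span (ZMod 2) (w '' A), runN w Q m = w m + u) ∧
    ∀ u ∈ span (ZMod 2) (w '' A), ∃ t ≤ Q.length, runN w (Q.take t) m = w m + u

lemma Sweeps.shift {Q : List (ℕ × ℕ)} {A : Set ℕ} {m : ℕ} (h : Sweeps Q A m) :
    Sweeps (Q.map fun g => (g.1 + 1, g.2 + 1)) ((· + 1) '' A) (m + 1) := by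
  intro w
  obtain ⟨h1, h2, h3⟩ := h fun j => w (j + 1)
  rw [Set.image_image]
  refine ⟨fun k hk => ?_, ?_, fun u hu => ?_⟩
  · cases k with
    | zero => exact (runN_shift Q w).1
    | succ k => rw [(runN_shift Q w).2, h1 k (by omega)]
  · rw [(runN_shift Q w).2]
    exact h2
  · obtain ⟨t, ht, h⟩ := h3 u hu
    exact ⟨t, by simpa using ht, by rw [← List.map_take, (runN_shift _ w).2, h]⟩

/-- If `V` adds wire `x` to wire `m` modulo `span (w '' A)`, then running `Q` before and after `V`
covers both cosets of that span which make up the coset of the span with `x` added to `A`. -/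
lemma Sweeps.step {Q V : List (ℕ × ℕ)} {A : Set ℕ} {m x : ℕ} (hQ : Sweeps Q A m)
    (hm : m ∉ A) (hx : x ≠ m)
    (hV : ∀ w : WireData, (∀ k, k ≠ m → runN w V k = w k) ∧
      ∃ u ∈ span (ZMod 2) (w '' A), runN w V m = w m + w x + u) :
    Sweeps (Q ++ V ++ Q) (insert x A) m := by
  -- data agreeing off wire `m` have the same image of `A`
  have himg : ∀ w w' : WireData, (∀ k, k ≠ m → w' k = w k) → w' '' A = w '' A := fun w w' h =>
    Set.image_congr fun a ha => h a fun e => hm (e ▸ ha)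
  intro w
  obtain ⟨a1, ⟨u1, hu1, a2⟩, a3⟩ := hQ w
  obtain ⟨b1, u2, hu2, b2⟩ := hV (runN w Q)
  rw [himg _ _ a1] at hu2
  have hw' : ∀ k, k ≠ m → runN (runN w Q) V k = w k := fun k hk => by rw [b1 k hk, a1 k hk]
  have hm' : runN (runN w Q) V m = w m + (w x + (u1 + u2)) := by
    rw [b2, a2, a1 x hx]; abel
  obtain ⟨c1, ⟨u3, hu3, c2⟩, c3⟩ := hQ (runN (runN w Q) V)
  rw [himg _ _ hw'] at hu3 c3
  have hsub : span (ZMod 2) (w '' A) ≤ span (ZMod 2) (w '' insert x A) :=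
    span_mono (Set.image_mono (Set.subset_insert _ _))
  have hxm : w x ∈ span (ZMod 2) (w '' insert x A) := subset_span ⟨x, Set.mem_insert _ _, rfl⟩
  refine ⟨fun k hk => ?_, ⟨w x + (u1 + u2) + u3, ?_, ?_⟩, fun u hu => ?_⟩
  · rw [runN_append, runN_append, c1 k hk, hw' k hk]
  · exact add_mem (add_mem hxm (add_mem (hsub hu1) (hsub hu2))) (hsub hu3)
  · rw [runN_append, runN_append, c2, hm', add_assoc]
  · rw [Set.image_insert_eq, mem_span_insert] at hu
    obtain ⟨c, z, hz, rfl⟩ := hu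
    have hc : c = 0 ∨ c = 1 := by revert c; decide
    rcases hc with rfl | rfl
    · -- the coset `w m + U` is covered by the first copy of `Q`
      obtain ⟨t, ht, h⟩ := a3 z hz
      refine ⟨t, by simp; omega, ?_⟩
      rw [List.append_assoc, List.take_append_of_le_length ht, h]
      simp
    · -- the coset `w m + w x + U` is covered by the second copy of `Q`
      obtain ⟨t, ht, h⟩ := c3 (z + (u1 + u2)) (add_mem hz (add_mem hu1 hu2))
      refine ⟨(Q ++ V).length + t, by simp; omega, ?_⟩
      rw [List.take_length_add_append, runN_append, runN_append, h, hm', one_smul]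
      have := vec_add_self (u1 + u2)
      calc w m + (w x + (u1 + u2)) + (z + (u1 + u2))
          = w m + (w x + z) + ((u1 + u2) + (u1 + u2)) := by abel
        _ = w m + (w x + z) := by rw [this, add_zero]

/-- `runN_Vcirc` in the form of the ladder hypothesis of `Sweeps.step`. -/
lemma runN_Vcirc_of_subset {x m : ℕ} {A : Set ℕ} (hx : x ≠ m)
    (hA : ∀ k, (x < k ∧ k < m) ∨ (m < k ∧ k < x) → k ∈ A) (w : WireData) :
    (∀ k, k ≠ m → runN w (Vcirc x m) k = w k) ∧
      ∃ u ∈ span (ZMod 2) (w '' A), runN w (Vcirc x m) m = w m + w x + u := by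
  obtain ⟨h1, u, hu, h2⟩ := runN_Vcirc_s9 x m hx w
  exact ⟨h1, u, span_mono (Set.image_mono hA) hu, h2⟩

lemma sweeps_GRAY (n : ℕ) : Sweeps (GRAY (n + 1)) {j | j < n + 1 ∧ j ≠ (n + 1) / 2}
    ((n + 1) / 2) := by
  induction n with
  | zero =>
    have hA : {j | j < 0 + 1 ∧ j ≠ (0 + 1) / 2} = (∅ : Set ℕ) := by
      ext j; simp
    intro w
    rw [hA]
    simp [GRAY, runN]
  | succ n ih =>
    rw [GRAY]
    split_ifs with hpar
    · have hm : (n + 1) / 2 + 1 = (n + 1 + 1) / 2 := by omega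
      have hA : {j | j < n + 1 + 1 ∧ j ≠ (n + 1 + 1) / 2} =
          insert 0 ((· + 1) '' {j | j < n + 1 ∧ j ≠ (n + 1) / 2}) := by
        ext j
        cases j with
        | zero => simp; omega
        | succ j => simp; omega
      have hs := ih.shift
      rw [hm] at hs
      rw [hA]
      refine hs.step ?_ (by omega) (runN_Vcirc_of_subset (by omega) ?_)
      · rintro ⟨j, ⟨_, h⟩, e⟩
        simp only at e
        omega
      · intro k hk
        exact ⟨k - 1, ⟨by omega, by omega⟩, by simp only; omega⟩
    · have hm : (n + 1) / 2 = (n + 1 + 1) / 2 := by omega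
      have hA : {j | j < n + 1 + 1 ∧ j ≠ (n + 1 + 1) / 2} =
          insert (n + 1) {j | j < n + 1 ∧ j ≠ (n + 1) / 2} := by
        ext j
        simp only [Set.mem_ofPred_eq, Set.mem_insert_iff]
        omega
      rw [hm] at ih hA
      rw [hA]
      refine ih.step (fun h => h.2 rfl) (by omega) (runN_Vcirc_of_subset (by omega) ?_)
      intro k hk
      exact ⟨by omega, by omega⟩

end Helpers

/-- For every `n ≥ 1`, with `m = ⌊n/2⌋` and initial wire
signatures `e_k`: (1) every `v ∈ 𝔽₂ⁿ` (i.e. `v` vanishing on wires `≥ n`)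
with `⟨v, e_m⟩ = 1` occurs as the signature of wire `m` at some time
`0 ≤ t ≤ len (GRAY n)`; and (2) the final signature of every wire `k ≠ m` is
still `e_k`, so among the wires `{0, …, n-1}`, `m` is the only wire whose
final signature `v` can satisfy `⟨v, e_m⟩ = 1`. -/
theorem stmt_9 (n : ℕ) (hn : 1 ≤ n) :
    (∀ v : ℕ → ZMod 2, (∀ j, n ≤ j → v j = 0) → v (n / 2) = 1 →
      ∃ t ≤ (GRAY n).length, wireSigN ((GRAY n).take t) (n / 2) = v) ∧
    (∀ k, k ≠ n / 2 → wireSigN (GRAY n) k = Pi.single k 1) ∧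
    (∀ k, k < n → wireSigN (GRAY n) k (n / 2) = 1 → k = n / 2) := by
  obtain ⟨n, rfl⟩ : ∃ k, n = k + 1 := ⟨n - 1, by omega⟩
  obtain ⟨h1, -, h3⟩ := sweeps_GRAY n fun k => Pi.single k 1
  refine ⟨fun v hv hvm => ?_, h1, fun k _ hk => ?_⟩
  · obtain ⟨t, ht, h⟩ := h3
      (∑ j ∈ (Finset.range (n + 1)).erase ((n + 1) / 2),
        v j • (Pi.single j 1 : ℕ → ZMod 2))
      (Submodule.sum_mem _ fun j hj => Submodule.smul_mem _ _ (Submodule.subset_span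
        ⟨j, by simpa [and_comm] using hj, rfl⟩))
    refine ⟨t, ht, ?_⟩
    rw [wireSigN, h]
    funext i
    simp only [Pi.add_apply, Finset.sum_apply, Pi.smul_apply, smul_eq_mul, Pi.single_apply,
      mul_ite, mul_one, mul_zero, Finset.sum_ite_eq, Finset.mem_erase, Finset.mem_range]
    by_cases hi : i = (n + 1) / 2
    · simp [hi, hvm]
    · by_cases hin : i < n + 1
      · simp [hi, hin]
      · simp [hi, hin, hv i (by omega)]
  · by_contra hne
    rw [wireSigN, h1 k hne, Pi.single_eq_of_ne (Ne.symm hne)] at hk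
    exact zero_ne_one hk
end

section
/- Let n ≥ 2, let 1 ≤ k < n with gcd(k, n) = 1, and let 1 ≤ l < n satisfy k·l ≡ −1 (mod n). Assume the polynomial f(X) = Xⁿ + Xˡ + 1 over 𝔽₂ is primitive, i.e. f is irreducible and its roots have multiplicative order 2ⁿ − 1 in 𝔽_{2ⁿ}×. Then the CX circuit on n wires consisting of the gates (k·j mod n, (k·j + 1) mod n) for j = 0, 1, …, 2ⁿ − 2 (in increasing order of j) respects the circular topology and is a solution to the WPA problem. -/
/-- The circuit consisting of the gates
`(k·j mod n, (k·j + 1) mod n)` for `j = 0, 1, …, len - 1`. -/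
def circCircuit (n k len : ℕ) (hn : 0 < n) : List (Fin n × Fin n) :=
  (List.range len).map fun j =>
    (⟨k * j % n, Nat.mod_lt _ hn⟩, ⟨(k * j + 1) % n, Nat.mod_lt _ hn⟩)

/-- The wire `k * (m - l) mod n`, with `m - l` encoded as `m + (n - l)` so that the subtraction in
`ℕ` does not truncate (for `l ≤ n`). It is the target of gate `m`, and the control of gate `m - l`
if `l ≤ m`. -/
def lfsrWire (n k l : ℕ) (hn : 0 < n) (m : ℕ) : Fin n :=
  ⟨k * (m + (n - l)) % n, Nat.mod_lt _ hn⟩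

theorem lfsrWire_eq_iff {n k l : ℕ} (hn : 0 < n) (hcop : Nat.Coprime k n) (a b : ℕ) :
    lfsrWire n k l hn a = lfsrWire n k l hn b ↔ a ≡ b [MOD n] := by
  rw [lfsrWire, lfsrWire, Fin.mk.injEq]
  constructor
  · intro h
    have h' : k * (a + (n - l)) ≡ k * (b + (n - l)) [MOD n] := h
    exact Nat.ModEq.add_right_cancel' _
      (Nat.ModEq.cancel_left_of_coprime (Nat.Coprime.symm hcop) h')
  · intro h
    exact (h.add_right _).mul_left _

theorem lfsrWire_bijective {n k l : ℕ} (hn : 0 < n) (hcop : Nat.Coprime k n) (s : ℕ) :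
    Function.Bijective fun i : Fin n => lfsrWire n k l hn (s + i) := by
  rw [← Finite.injective_iff_bijective]
  intro a b h
  have h' := Nat.ModEq.add_left_cancel' _ ((lfsrWire_eq_iff hn hcop _ _).1 h)
  exact Fin.ext (Nat.ModEq.eq_of_lt_of_lt h' a.2 b.2)

theorem control_eq_lfsrWire {n k l : ℕ} (hn : 0 < n) (hln : l < n) (t : ℕ) :
    (⟨k * t % n, Nat.mod_lt _ hn⟩ : Fin n) = lfsrWire n k l hn (t + l) := by
  have h : t + l + (n - l) = t + n := by omega
  simp [lfsrWire, h, Nat.mul_add]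

theorem target_eq_lfsrWire {n k l : ℕ} (hn : 0 < n) (hln : l < n)
    (hkl : (k * l + 1) % n = 0) (t : ℕ) :
    (⟨(k * t + 1) % n, Nat.mod_lt _ hn⟩ : Fin n) = lfsrWire n k l hn t := by
  rw [lfsrWire, Fin.mk.injEq]
  change k * t + 1 ≡ k * (t + (n - l)) [MOD n]
  -- after adding `k * l` to both sides, both are congruent to `k * t`
  refine Nat.ModEq.add_right_cancel' (k * l) ?_
  have h : k * (t + (n - l)) + k * l = k * t + n * k := by
    rw [← Nat.mul_add, show t + (n - l) + l = t + n by omega, Nat.mul_add, Nat.mul_comm k n]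
  have h1 : k * l + 1 ≡ 0 [MOD n] := by simpa [Nat.ModEq] using hkl
  rw [h, show k * t + 1 + k * l = k * t + (k * l + 1) by ring]
  simpa [Nat.ModEq] using h1.add_left (k * t)

theorem circCircuit_succ (n k t : ℕ) (hn : 0 < n) :
    circCircuit n k (t + 1) hn = circCircuit n k t hn ++
      [(⟨k * t % n, Nat.mod_lt _ hn⟩, ⟨(k * t + 1) % n, Nat.mod_lt _ hn⟩)] := by
  simp [circCircuit, List.range_succ]

theorem take_circCircuit (n k len t : ℕ) (hn : 0 < n) (ht : t ≤ len) :
    (circCircuit n k len hn).take t = circCircuit n k t hn := by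
  simp [circCircuit, ← List.map_take, List.take_range, ht]

/-- The shift register invariant: after `t` gates, the wires `lfsrWire t, …, lfsrWire (t + n - 1)`,
which are all the wires, carry the images of `α ^ t, …, α ^ (t + n - 1)`. -/
theorem wireSig_lfsrWire {F : Type*} [Field F] [Algebra (ZMod 2) F] {n k l : ℕ} (hn : 0 < n)
    (hcop : Nat.Coprime k n) (hln : l < n) (hkl : (k * l + 1) % n = 0)
    (φ : F ≃ₗ[ZMod 2] (Fin n → ZMod 2)) (α : F) (hrec : α ^ n = 1 + α ^ l)
    (hφ : ∀ i < n, φ (α ^ i) = Pi.single (lfsrWire n k l hn i) 1) (t : ℕ) :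
    ∀ i < n, wireSig (circCircuit n k t hn) (lfsrWire n k l hn (t + i)) = φ (α ^ (t + i)) := by
  induction t with
  | zero =>
    intro i hi
    simp [circCircuit, wireSig, hφ i hi]
  | succ t ih =>
    intro i hi
    have hstep : wireSig (circCircuit n k (t + 1) hn) =
        Function.update (wireSig (circCircuit n k t hn)) (lfsrWire n k l hn t)
          (φ (α ^ t) + φ (α ^ (t + l))) := by
      have h0 := ih 0 hn
      rw [Nat.add_zero] at h0
      rw [← ih l hln, ← h0, circCircuit_succ, control_eq_lfsrWire hn hln,
        target_eq_lfsrWire hn hln hkl]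
      simp [wireSig, sigStep]
    rw [hstep]
    rcases Nat.lt_or_ge (i + 1) n with h | h
    · rw [Function.update_of_ne, show t + 1 + i = t + (i + 1) by ring, ih _ h]
      intro he
      have h1 := (lfsrWire_eq_iff hn hcop _ _).1 he
      have h2 : t + (i + 1) ≡ t + 0 [MOD n] := by
        simpa [Nat.add_assoc, Nat.add_comm 1 i] using h1
      have := Nat.ModEq.eq_of_lt_of_lt (Nat.ModEq.add_left_cancel' _ h2) h hn
      omega
    · have hi' : t + 1 + i = t + n := by omega
      have hw : lfsrWire n k l hn (t + n) = lfsrWire n k l hn t :=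
        (lfsrWire_eq_iff hn hcop _ _).2 (by simp [Nat.ModEq])
      rw [hi', hw, Function.update_self, ← map_add, pow_add, pow_add, hrec]
      ring_nf

/-- An element of order `q - 1` in a field with `q = 2 ^ n` elements generates the unit group. -/
theorem exists_pow_eq_of_orderOf {F : Type*} [Field F] [Algebra (ZMod 2) F] {n : ℕ} (hn : 0 < n)
    (φ : F ≃ₗ[ZMod 2] (Fin n → ZMod 2)) (α : F) (hord : orderOf α = 2 ^ n - 1) (x : F)
    (hx : x ≠ 0) : ∃ m < 2 ^ n - 1, α ^ m = x := by
  classical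
  have hpos : 0 < 2 ^ n - 1 := Nat.sub_pos_of_lt (Nat.one_lt_two_pow hn.ne')
  let _ : Fintype F := Fintype.ofEquiv _ φ.symm.toEquiv
  have hcard : Fintype.card F = 2 ^ n := by
    rw [Fintype.card_congr φ.toEquiv]; simp [ZMod.card]
  have hα : α ≠ 0 := by
    rintro rfl
    have h := pow_orderOf_eq_one (0 : F)
    rw [hord, zero_pow hpos.ne'] at h
    exact zero_ne_one h
  have hsub : (Finset.range (2 ^ n - 1)).image (fun m => α ^ m) ⊆ Finset.univ.erase (0 : F) := by
    intro y hy
    obtain ⟨m, -, rfl⟩ := Finset.mem_image.1 hy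
    simp [hα]
  have heq := Finset.eq_of_subset_of_card_le hsub (by
    rw [Finset.card_image_of_injOn, Finset.card_erase_of_mem (Finset.mem_univ _),
      Finset.card_univ, hcard, Finset.card_range]
    intro a ha b hb h
    refine pow_injOn_Iio_orderOf ?_ ?_ h
    · simpa [hord] using ha
    · simpa [hord] using hb)
  have hmem : x ∈ Finset.univ.erase (0 : F) := by simp [hx]
  rw [← heq] at hmem
  simpa using hmem

theorem isWPA_circCircuit {F : Type*} [Field F] [Algebra (ZMod 2) F] {n k l : ℕ} (hn : 0 < n)
    (hcop : Nat.Coprime k n) (hln : l < n) (hkl : (k * l + 1) % n = 0)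
    (φ : F ≃ₗ[ZMod 2] (Fin n → ZMod 2)) (α : F) (hrec : α ^ n = 1 + α ^ l)
    (hord : orderOf α = 2 ^ n - 1)
    (hφ : ∀ i < n, φ (α ^ i) = Pi.single (lfsrWire n k l hn i) 1) :
    IsWPA (circCircuit n k (2 ^ n - 1) hn) := by
  have key := wireSig_lfsrWire hn hcop hln hkl φ α hrec hφ
  constructor
  · intro v hv
    obtain ⟨m, hm, hmv⟩ := exists_pow_eq_of_orderOf hn φ α hord (φ.symm v) (by simpa using hv)
    refine ⟨lfsrWire n k l hn m, m, by simpa [circCircuit] using hm.le, ?_⟩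
    have h := key m 0 hn
    rw [take_circCircuit _ _ _ _ _ hm.le]
    simpa [hmv] using h
  · let e (s : ℕ) : Fin n ≃ Fin n := Equiv.ofBijective _ (lfsrWire_bijective (l := l) hn hcop s)
    refine ⟨(e (2 ^ n - 1)).symm.trans (e 0), fun w => ?_⟩
    obtain ⟨i, rfl⟩ := (e (2 ^ n - 1)).surjective w
    have h := key (2 ^ n - 1) i i.2
    have h1 : α ^ (2 ^ n - 1) = 1 := hord ▸ pow_orderOf_eq_one α
    rw [pow_add, h1, one_mul, hφ i i.2] at h
    simpa [e] using h

/-- Let `n ≥ 2`, `1 ≤ k < n` with `gcd(k, n) = 1`, and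
`1 ≤ l < n` with `k·l ≡ -1 (mod n)`. If `f = Xⁿ + Xˡ + 1` over `𝔽₂` is
primitive (irreducible with roots of multiplicative order `2ⁿ - 1` in
`𝔽_{2ⁿ}ˣ`), then the CX circuit consisting of the gates
`(k·j mod n, (k·j + 1) mod n)` for `j = 0, …, 2ⁿ - 2` respects the circular
topology and is a solution to the WPA problem on `n` wires. -/
theorem stmt_15 (n k l : ℕ) (hn : 2 ≤ n) (hk1 : 1 ≤ k) (hkn : k < n)
    (hcop : Nat.Coprime k n) (hl1 : 1 ≤ l) (hln : l < n)
    (hkl : (k * l + 1) % n = 0)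
    (hirr : Irreducible (Polynomial.X ^ n + Polynomial.X ^ l + 1 :
      Polynomial (ZMod 2)))
    (hord : orderOf (AdjoinRoot.root
        (Polynomial.X ^ n + Polynomial.X ^ l + 1 : Polynomial (ZMod 2)))
      = 2 ^ n - 1) :
    (∀ g ∈ circCircuit n k (2 ^ n - 1) (by omega),
      g.1 ≠ g.2 ∧
        (((g.1 : ℕ) + 1) % n = (g.2 : ℕ) ∨ ((g.2 : ℕ) + 1) % n = (g.1 : ℕ))) ∧
    IsWPA (circCircuit n k (2 ^ n - 1) (by omega)) := by
  have hn0 : 0 < n := by omega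
  refine ⟨?_, ?_⟩
  · intro g hg
    obtain ⟨j, -, rfl⟩ := List.mem_map.1 hg
    refine ⟨fun h => ?_, Or.inl ?_⟩
    · have h' : k * j + 0 ≡ k * j + 1 [MOD n] := congrArg Fin.val h
      have := Nat.ModEq.eq_of_lt_of_lt (Nat.ModEq.add_left_cancel' _ h') hn0 hn
      omega
    · simp
  · set f : Polynomial (ZMod 2) := Polynomial.X ^ n + Polynomial.X ^ l + 1 with hf
    have : Fact (Irreducible f) := ⟨hirr⟩
    have hlow : (Polynomial.X ^ l + 1 : Polynomial (ZMod 2)).degree < n := by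
      refine lt_of_le_of_lt (Polynomial.degree_add_le _ _) (max_lt ?_ ?_)
      · rw [Polynomial.degree_X_pow]; exact_mod_cast hln
      · rw [Polynomial.degree_one]; exact_mod_cast hn0
    have hmonic : f.Monic := by
      rw [hf, add_assoc]; exact Polynomial.monic_X_pow_add hlow
    have hdeg : f.natDegree = n := by
      rw [hf, add_assoc]
      refine Polynomial.natDegree_eq_of_degree_eq_some ?_
      rw [Polynomial.degree_add_eq_left_of_degree_lt, Polynomial.degree_X_pow]
      rwa [Polynomial.degree_X_pow]
    let α := AdjoinRoot.root f
    let pb := AdjoinRoot.powerBasis' hmonic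
    have hdim : pb.dim = n := hdeg
    let e : Fin n ≃ Fin n :=
      Equiv.ofBijective _ (lfsrWire_bijective (k := k) (l := l) hn0 hcop 0)
    let b := (pb.basis.reindex (finCongr hdim)).reindex e
    have hb (i : Fin n) : b (e i) = α ^ (i : ℕ) := by
      simp [b, α, pb]
    have hrec : α ^ n = 1 + α ^ l := by
      have h : (1 + α ^ l) + α ^ n = 0 := by
        have := AdjoinRoot.eval₂_root f
        simp only [hf, Polynomial.eval₂_add, Polynomial.eval₂_pow, Polynomial.eval₂_X,
          Polynomial.eval₂_one] at this
        rw [← this]; ring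
      have : CharP (AdjoinRoot f) 2 := charP_of_injective_algebraMap' (ZMod 2) 2
      exact (CharTwo.add_eq_zero.1 h).symm
    refine isWPA_circCircuit hn0 hcop hln hkl b.equivFun α hrec hord fun i hi => ?_
    rw [← hb ⟨i, hi⟩]
    ext j
    simp [e, Pi.single_apply, eq_comm]
end
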